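/- arXiv:1905.03579 — 4 statements merged into one kernel-verified Lean document; each statement's English description precedes it below -/
import Mathlib

section
/- Let 𝔄 and 𝔅 be the increasing events generated by the simple points of two nonempty sets X ⊆ {1,…,N} and Y ⊆ {1,…,N} respectively, i.e. 𝔄 = {A ⊆ {1,…,N} : A ∩ X ≠ ∅} and 𝔅 = {A ⊆ {1,…,N} : A ∩ Y ≠ ∅}. Then the van den Berg–Kesten inequality holds: P(φ ∈ 𝔄∘𝔅) ≤ P(φ ∈ 𝔄) · P(φ ∈ 𝔅), where 𝔄∘𝔅 = {K ⊆ {1,…,N} : ∃ x ∈ X, ∃ y ∈ Y, x ≠ y, x ∈ K and y ∈ K}. -/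
open Matrix

/-- Squared determinant of the submatrix of `Z` formed by the columns indexed by `S`,
when `S` has exactly `q` elements; `0` otherwise. -/
noncomputable def detSq {q N : ℕ} (Z : Matrix (Fin q) (Fin N) ℝ) (S : Finset (Fin N)) : ℝ :=
  if h : S.card = q then
    (Matrix.det (Matrix.of fun i j : Fin q => Z i ((S.orderIsoOfFin h j : Fin N)))) ^ 2
  else 0

open scoped Classical in
/-- `prDP Z E` is the probability that the determinantal process associated to the
matrix `Z` (with orthonormal rows) belongs to the family `E` of subsets of `{1,…,N}`:
`P(φ(Z) ∈ E) = Σ_{|S| = q, S ∈ E} det(Z_S)²`. -/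
noncomputable def prDP {q N : ℕ} (Z : Matrix (Fin q) (Fin N) ℝ)
    (E : Set (Finset (Fin N))) : ℝ :=
  ∑ S : Finset (Fin N), if S ∈ E then detSq Z S else 0


open Finset in
theorem cb_aux {p N : ℕ} (A B : Matrix (Fin p) (Fin N) ℝ) :
    (A * Bᵀ).det = ∑ f : Fin p → Fin N, (∏ i, A i (f i)) * (Matrix.of fun i j => B j (f i)).det := by
  have h1 : (A * Bᵀ) = fun i => ∑ k : Fin N, A i k • (fun j => B j k) := by
    ext i j
    simp [Matrix.mul_apply, Finset.sum_apply]
  have h2 := (detRowAlternating (n := Fin p) (R := ℝ)).toMultilinearMap.map_sum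
    (fun (i : Fin p) (k : Fin N) => A i k • (fun j => B j k))
  have h3 : (A * Bᵀ).det = (detRowAlternating (n := Fin p) (R := ℝ)).toMultilinearMap
      (fun i => ∑ k : Fin N, A i k • (fun j => B j k)) := by rw [h1]; rfl
  rw [h3, h2]
  refine Finset.sum_congr rfl fun f _ => ?_
  rw [MultilinearMap.map_smul_univ]
  rfl

theorem cb_fiber {p N : ℕ} (A B : Matrix (Fin p) (Fin N) ℝ) (S : Finset (Fin N)) (h : S.card = p) :
    ∑ f : Fin p → Fin N with Finset.univ.image f = S,
      (∏ i, A i (f i)) * (Matrix.of fun i j => B j (f i)).det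
    = (Matrix.of fun i j : Fin p => A i ((S.orderIsoOfFin h j : Fin N))).det *
      (Matrix.of fun i j : Fin p => B i ((S.orderIsoOfFin h j : Fin N))).det := by
  set e : Fin p → Fin N := fun j => (S.orderIsoOfFin h j : Fin N) with he
  have einj : Function.Injective e := fun a b hab => by
    simpa [he] using hab
  have emem : ∀ j, e j ∈ S := fun j => (S.orderIsoOfFin h j).2
  have esurj : ∀ s ∈ S, ∃ j, e j = s := fun s hs =>
    ⟨(S.orderIsoOfFin h).symm ⟨s, hs⟩, by
      simp only [he, OrderIso.apply_symm_apply]⟩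
  have key : ∑ f : Fin p → Fin N with Finset.univ.image f = S,
      (∏ i, A i (f i)) * (Matrix.of fun i j => B j (f i)).det
      = ∑ σ : Equiv.Perm (Fin p), (∏ i, A i (e (σ i))) *
        (Matrix.of fun i j => B j (e (σ i))).det := by
    symm
    refine Finset.sum_bij (fun σ _ => fun i => e (σ i)) ?_ ?_ ?_ ?_
    · intro σ _
      simp only [Finset.mem_filter, Finset.mem_univ, true_and]
      ext s
      simp only [Finset.mem_image, Finset.mem_univ, true_and]
      constructor
      · rintro ⟨i, rfl⟩; exact emem _
      · intro hs
        obtain ⟨j, rfl⟩ := esurj s hs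
        exact ⟨σ.symm j, by simp⟩
    · intro σ _ τ _ hst
      ext i
      exact congrArg Fin.val (einj (congrFun hst i))
    · intro f hf
      simp only [Finset.mem_filter, Finset.mem_univ, true_and] at hf
      have hfinj : Function.Injective f := by
        have : (Finset.univ.image f).card = (Finset.univ : Finset (Fin p)).card := by
          rw [hf, h]; simp
        have := Finset.card_image_iff.mp this
        simpa using this
      have hm : ∀ i, ∃ j, e j = f i := fun i => esurj _ (by
        rw [← hf]; exact Finset.mem_image_of_mem _ (Finset.mem_univ _))
      choose g hg using hm
      have ginj : Function.Injective g := fun a b hab => hfinj (by rw [← hg, ← hg, hab])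
      refine ⟨Equiv.ofBijective g (Finite.injective_iff_bijective.mp ginj), Finset.mem_univ _, ?_⟩
      funext i
      simp [hg]
    · intro σ _; rfl
  rw [key]
  have hB : ∀ σ : Equiv.Perm (Fin p), (Matrix.of fun i j => B j (e (σ i))).det
      = (Equiv.Perm.sign σ : ℝ) * (Matrix.of fun i j : Fin p => B i (e j)).det := by
    intro σ
    rw [← Matrix.det_transpose (Matrix.of fun i j : Fin p => B i (e j)), ← Matrix.det_permute]
    rfl
  simp_rw [hB]
  rw [← Matrix.det_transpose (Matrix.of fun i j : Fin p => A i (e j)), Matrix.det_apply'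
    (Matrix.of fun i j : Fin p => A i (e j))ᵀ, Finset.sum_mul]
  refine Finset.sum_congr rfl fun σ _ => ?_
  simp only [Matrix.transpose_apply, Matrix.of_apply]
  ring

/-- Cauchy–Binet. -/
theorem cb {p N : ℕ} (A B : Matrix (Fin p) (Fin N) ℝ) :
    (A * Bᵀ).det = ∑ S : Finset (Fin N), if h : S.card = p then
      (Matrix.of fun i j : Fin p => A i ((S.orderIsoOfFin h j : Fin N))).det *
      (Matrix.of fun i j : Fin p => B i ((S.orderIsoOfFin h j : Fin N))).det else 0 := by
  rw [cb_aux, ← Finset.sum_fiberwise Finset.univ (fun f : Fin p → Fin N => Finset.univ.image f)]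
  refine Finset.sum_congr rfl fun S _ => ?_
  split_ifs with h
  · exact cb_fiber A B S h
  · refine Finset.sum_eq_zero fun f hf => ?_
    simp only [Finset.mem_filter, Finset.mem_univ, true_and] at hf
    have : ¬ Function.Injective f := fun hi => h (by
      rw [← hf, Finset.card_image_of_injective _ hi]; simp)
    simp only [Function.Injective, not_forall] at this
    obtain ⟨a, b, hab, hne⟩ := this
    rw [Matrix.det_zero_of_row_eq hne (by funext j; simp [hab]), mul_zero]

/-- Probability of being contained in `T`. -/
noncomputable def subP {q N : ℕ} (Z : Matrix (Fin q) (Fin N) ℝ) (T : Finset (Fin N)) : ℝ :=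
  ∑ S : Finset (Fin N), if S ⊆ T then detSq Z S else 0

theorem detSq_nonneg {q N : ℕ} (Z : Matrix (Fin q) (Fin N) ℝ) (S : Finset (Fin N)) :
    0 ≤ detSq Z S := by
  unfold detSq; split_ifs <;> positivity

noncomputable def gramT {q N : ℕ} (Z : Matrix (Fin q) (Fin N) ℝ) (T : Finset (Fin N)) :
    Matrix (Fin q) (Fin q) ℝ := Matrix.of fun i j => ∑ k ∈ T, Z i k * Z j k

theorem subP_eq {q N : ℕ} (Z : Matrix (Fin q) (Fin N) ℝ) (T : Finset (Fin N)) :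
    subP Z T = (gramT Z T).det := by
  have h : gramT Z T = (Matrix.of fun i k => Z i k * (if k ∈ T then 1 else 0)) * Zᵀ := by
    ext i j
    simp [gramT, Matrix.mul_apply, Finset.sum_ite_mem]
  rw [h, cb, subP]
  refine Finset.sum_congr rfl fun S _ => ?_
  unfold detSq
  by_cases hc : S.card = q
  · simp only [hc, dite_true]
    split_ifs with hS
    · rw [sq]
      congr 2
      ext i j
      have : ((S.orderIsoOfFin hc j : Fin N)) ∈ T := hS (S.orderIsoOfFin hc j).2
      simp only [Matrix.of_apply, this, if_true, mul_one]
    · obtain ⟨s, hs, hsT⟩ := Finset.not_subset.mp hS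
      rw [Matrix.det_eq_zero_of_column_eq_zero ((S.orderIsoOfFin hc).symm ⟨s, hs⟩), zero_mul]
      intro i
      simp only [Matrix.of_apply, OrderIso.apply_symm_apply, hsT, if_false, mul_zero]
  · simp [hc]

theorem det_local {q : ℕ} (G : Matrix (Fin q) (Fin q) ℝ) (hG : Gᵀ = G) (hd : G.det ≠ 0)
    (x y : Fin q → ℝ) :
    (G + Matrix.of fun i j => x i * x j + y i * y j).det * G.det ≤
      (G + Matrix.of fun i j => x i * x j).det * (G + Matrix.of fun i j => y i * y j).det := by
  have hu : IsUnit G.det := isUnit_iff_ne_zero.mpr hd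
  have hi : (G⁻¹)ᵀ = G⁻¹ := by rw [Matrix.transpose_nonsing_inv, hG]
  have one : ∀ x : Fin q → ℝ, (G + Matrix.of fun i j => x i * x j).det
      = G.det * (1 + x ⬝ᵥ (G⁻¹ *ᵥ x)) := by
    intro x
    have := Matrix.det_add_mul (Matrix.of fun i (_ : Fin 1) => x i)
      (Matrix.of fun (_ : Fin 1) i => x i) hu
    have e : (Matrix.of fun i (_ : Fin 1) => x i) * (Matrix.of fun (_ : Fin 1) i => x i)
      = Matrix.of fun i j => x i * x j := by ext i j; simp [Matrix.mul_apply]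
    rw [e] at this
    rw [this, Matrix.mul_assoc]
    simp [Matrix.det_fin_one, Matrix.mul_apply, dotProduct, mulVec]
  have two : (G + Matrix.of fun i j => x i * x j + y i * y j).det
      = G.det * ((1 + x ⬝ᵥ (G⁻¹ *ᵥ x)) * (1 + y ⬝ᵥ (G⁻¹ *ᵥ y))
        - (x ⬝ᵥ (G⁻¹ *ᵥ y)) * (y ⬝ᵥ (G⁻¹ *ᵥ x))) := by
    have := Matrix.det_add_mul (Matrix.of fun i (k : Fin 2) => (![x, y] k) i)
      (Matrix.of fun (k : Fin 2) i => (![x, y] k) i) hu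
    have e : (Matrix.of fun i (k : Fin 2) => (![x, y] k) i) *
        (Matrix.of fun (k : Fin 2) i => (![x, y] k) i)
      = Matrix.of fun i j => x i * x j + y i * y j := by
        ext i j; simp [Matrix.mul_apply, Fin.sum_univ_two]
    rw [e] at this
    rw [this, Matrix.mul_assoc]
    simp [Matrix.det_fin_two, Matrix.mul_apply, dotProduct, mulVec]
  have sym : y ⬝ᵥ (G⁻¹ *ᵥ x) = x ⬝ᵥ (G⁻¹ *ᵥ y) := by
    rw [Matrix.dotProduct_mulVec, ← Matrix.mulVec_transpose, hi, dotProduct_comm]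
  rw [one, one, two, sym]
  nlinarith [sq_nonneg (G.det * (x ⬝ᵥ (G⁻¹ *ᵥ y)))]

section
variable {q N : ℕ} (Z : Matrix (Fin q) (Fin N) ℝ)

theorem subP_nonneg (T : Finset (Fin N)) : 0 ≤ subP Z T :=
  Finset.sum_nonneg fun S _ => by split_ifs <;> simp [detSq_nonneg]

theorem subP_mono {S T : Finset (Fin N)} (h : S ⊆ T) : subP Z S ≤ subP Z T :=
  Finset.sum_le_sum fun A _ => by
    by_cases h1 : A ⊆ S
    · simp [h1, h1.trans h]
    · simp only [h1, if_false]; split_ifs <;> simp [detSq_nonneg]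

theorem subP_local (T : Finset (Fin N)) (x y : Fin N) :
    subP Z (insert x (insert y T)) * subP Z T ≤ subP Z (insert x T) * subP Z (insert y T) := by
  have mx := subP_mono Z (Finset.subset_insert x T)
  have my := subP_mono Z (Finset.subset_insert y T)
  have n0 := subP_nonneg Z T
  by_cases hx : x ∈ T
  · rw [Finset.insert_eq_of_mem (Finset.mem_insert_of_mem hx), Finset.insert_eq_of_mem hx, mul_comm]
  by_cases hy : y ∈ T
  · rw [Finset.insert_eq_of_mem hy]
  by_cases hxy : x = y
  · subst hxy
    rw [Finset.insert_idem]
    exact mul_le_mul_of_nonneg_left mx (n0.trans mx)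
  by_cases h0 : subP Z T = 0
  · rw [h0, mul_zero]; exact mul_nonneg (n0.trans mx) (n0.trans my)
  rw [subP_eq] at h0
  have hG : (gramT Z T)ᵀ = gramT Z T := by
    ext i j; simp [gramT, mul_comm]
  have := det_local (gramT Z T) hG h0 (fun i => Z i x) (fun i => Z i y)
  simp only [subP_eq]
  convert this using 3
  · ext i j
    simp [gramT, hx, hy, hxy]; ring
  · ext i j
    simp [gramT, hx]; ring
  · ext i j
    simp [gramT, hy]; ring

theorem subP_step1 (S D : Finset (Fin N)) (x : Fin N) :
    subP Z (insert x (S ∪ D)) * subP Z S ≤ subP Z (insert x S) * subP Z (S ∪ D) := by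
  induction D using Finset.induction_on with
  | empty => simp
  | insert y D _ ih =>
    rw [Finset.union_insert]
    have hl := subP_local Z (S ∪ D) x y
    have n := subP_nonneg Z
    rcases (n (S ∪ D)).eq_or_lt with h0 | hpos
    · have : subP Z S = 0 := le_antisymm (h0 ▸ subP_mono Z Finset.subset_union_left) (n S)
      rw [this, mul_zero]; exact mul_nonneg (n _) (n _)
    · refine le_of_mul_le_mul_right ?_ hpos
      have a := mul_le_mul_of_nonneg_right hl (n S)
      have b := mul_le_mul_of_nonneg_right ih (n (insert y (S ∪ D)))
      linarith

theorem subP_step2 (S T D : Finset (Fin N)) (hST : S ⊆ T) :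
    subP Z (T ∪ D) * subP Z S ≤ subP Z (S ∪ D) * subP Z T := by
  induction D using Finset.induction_on with
  | empty => simp [mul_comm]
  | insert x D _ ih =>
    rw [Finset.union_insert, Finset.union_insert]
    have hl := subP_step1 Z (S ∪ D) (T ∪ D) x
    rw [Finset.union_eq_right.mpr (Finset.union_subset_union_left hST)] at hl
    have n := subP_nonneg Z
    rcases (n (S ∪ D)).eq_or_lt with h0 | hpos
    · have : subP Z S = 0 := le_antisymm (h0 ▸ subP_mono Z Finset.subset_union_left) (n S)
      rw [this, mul_zero]; exact mul_nonneg (n _) (n _)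
    · refine le_of_mul_le_mul_right ?_ hpos
      have a := mul_le_mul_of_nonneg_right hl (n S)
      have b := mul_le_mul_of_nonneg_right ih (n (insert x (S ∪ D)))
      linarith

theorem subP_submod (A B : Finset (Fin N)) :
    subP Z (A ∪ B) * subP Z (A ∩ B) ≤ subP Z B * subP Z A := by
  have := subP_step2 Z (A ∩ B) A B Finset.inter_subset_left
  rwa [Finset.union_eq_right.mpr (Finset.inter_subset_right : A ∩ B ⊆ B)] at this

theorem subP_univ (hZ : Z * Zᵀ = 1) : subP Z Finset.univ = 1 := by
  rw [subP_eq, ← Matrix.det_one (n := Fin q), ← hZ]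
  rfl

theorem subP_eq' (T : Finset (Fin N)) :
    subP Z T = ∑ S : Finset (Fin N), (if S ⊆ T then 1 else 0) * detSq Z S := by
  simp [subP]

theorem prDP_hit (hZ : Z * Zᵀ = 1) (X : Finset (Fin N)) :
    prDP Z {A | (A ∩ X).Nonempty} = 1 - subP Z Xᶜ := by
  rw [← subP_univ Z hZ, subP, subP, prDP, ← Finset.sum_sub_distrib]
  refine Finset.sum_congr rfl fun S _ => ?_
  have : S ⊆ Xᶜ ↔ ¬ (S ∩ X).Nonempty := by
    rw [Finset.subset_compl_iff_disjoint_right, Finset.not_nonempty_iff_eq_empty,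
      Finset.disjoint_iff_inter_eq_empty]
  by_cases h : (S ∩ X).Nonempty <;> simp [this, h]

theorem union_bound (hZ : Z * Zᵀ = 1) (W : Finset (Fin N)) :
    1 - ∑ z ∈ W, (1 - subP Z {z}ᶜ) ≤ subP Z Wᶜ := by
  induction W using Finset.induction_on with
  | empty => simp [subP_univ Z hZ]
  | insert w W hw ih =>
    rw [Finset.sum_insert hw]
    have h := subP_univ Z hZ
    have : subP Z {w}ᶜ + subP Z Wᶜ ≤ subP Z Finset.univ + subP Z (insert w W)ᶜ := by
      simp only [subP, ← Finset.sum_add_distrib]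
      refine Finset.sum_le_sum fun S _ => ?_
      have e : S ⊆ (insert w W)ᶜ ↔ S ⊆ {w}ᶜ ∧ S ⊆ Wᶜ := by
        rw [Finset.insert_eq, Finset.compl_union, Finset.subset_inter_iff]
      have := detSq_nonneg Z S
      by_cases h1 : S ⊆ {w}ᶜ <;> by_cases h2 : S ⊆ Wᶜ <;>
        simp only [e, h1, h2, Finset.subset_univ, if_true, if_false, and_true, and_false,
          and_self] <;> linarith
    linarith

theorem point_bound (X Y S : Finset (Fin N)) :
    (open scoped Classical in
      if (∃ x ∈ X, ∃ y ∈ Y, x ≠ y ∧ x ∈ S ∧ y ∈ S) then (1 : ℝ) else 0) ≤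
    1 - (if S ⊆ Xᶜ then 1 else 0) - (if S ⊆ Yᶜ then 1 else 0)
      + (if S ⊆ (X ∪ Y)ᶜ then 1 else 0)
      - ∑ z ∈ X ∩ Y, ((if S ⊆ insert z (X ∪ Y)ᶜ then 1 else 0)
          - (if S ⊆ (X ∪ Y)ᶜ then (1 : ℝ) else 0)) := by
  have e : S ⊆ (X ∪ Y)ᶜ ↔ S ⊆ Xᶜ ∧ S ⊆ Yᶜ := by
    rw [Finset.compl_union, Finset.subset_inter_iff]
  have hsub : ∀ T : Finset (Fin N), S ⊆ Tᶜ ↔ ∀ s ∈ S, s ∉ T := fun T => by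
    simp [Finset.subset_iff]
  have hins : ∀ z, S ⊆ insert z (X ∪ Y)ᶜ ↔ ∀ s ∈ S, s ∈ X ∨ s ∈ Y → s = z := fun z => by
    simp only [Finset.subset_iff, Finset.mem_insert, Finset.mem_compl, Finset.mem_union]
    exact forall₂_congr fun s _ => by tauto
  by_cases hx : S ⊆ Xᶜ
  · have no : ¬ (∃ x ∈ X, ∃ y ∈ Y, x ≠ y ∧ x ∈ S ∧ y ∈ S) := by
      rintro ⟨x, hxX, y, hyY, _, hxS, _⟩
      exact (hsub X).mp hx x hxS hxX
    rw [if_neg no]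
    by_cases hy : S ⊆ Yᶜ
    · have hu : S ⊆ (X ∪ Y)ᶜ := e.mpr ⟨hx, hy⟩
      have : ∀ z, S ⊆ insert z (X ∪ Y)ᶜ := fun z => hu.trans (Finset.subset_insert _ _)
      simp only [hx, hy, hu, this, if_true]; simp
    · have hu : ¬ S ⊆ (X ∪ Y)ᶜ := fun h => hy (e.mp h).2
      have : ∑ z ∈ X ∩ Y, ((if S ⊆ insert z (X ∪ Y)ᶜ then 1 else 0)
          - (if S ⊆ (X ∪ Y)ᶜ then (1 : ℝ) else 0)) = 0 := by
        refine Finset.sum_eq_zero fun z hz => ?_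
        have : ¬ S ⊆ insert z (X ∪ Y)ᶜ := by
          intro h
          rw [hins] at h
          rw [hsub] at hy hx
          push Not at hy
          obtain ⟨s, hs, hsY⟩ := hy
          have := h s hs (Or.inr hsY)
          exact hx s hs (this ▸ (Finset.mem_inter.mp hz).1)
        rw [if_neg this, if_neg hu, sub_zero]
      rw [this, if_pos hx, if_neg hy, if_neg hu]; norm_num
  · have hu : ¬ S ⊆ (X ∪ Y)ᶜ := fun h => hx (e.mp h).1
    simp only [hx, hu, if_false, sub_zero, add_zero]
    have hx' := hx
    rw [hsub] at hx'
    push Not at hx'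
    obtain ⟨x, hxS, hxX⟩ := hx'
    by_cases hy : S ⊆ Yᶜ
    · have no : ¬ (∃ x ∈ X, ∃ y ∈ Y, x ≠ y ∧ x ∈ S ∧ y ∈ S) := by
        rintro ⟨x, hxX, y, hyY, _, _, hyS⟩
        exact (hsub Y).mp hy y hyS hyY
      have : ∑ z ∈ X ∩ Y, (if S ⊆ insert z (X ∪ Y)ᶜ then (1 : ℝ) else 0) = 0 := by
        refine Finset.sum_eq_zero fun z hz => if_neg ?_
        intro h
        rw [hins] at h
        have := h x hxS (Or.inl hxX)
        exact (hsub Y).mp hy x hxS (this ▸ (Finset.mem_inter.mp hz).2)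
      rw [this, if_neg no]; simp [hy]
    · simp only [hy, if_false, sub_zero]
      by_cases hE : ∃ x ∈ X, ∃ y ∈ Y, x ≠ y ∧ x ∈ S ∧ y ∈ S
      · have : ∑ z ∈ X ∩ Y, (if S ⊆ insert z (X ∪ Y)ᶜ then (1 : ℝ) else 0) = 0 := by
          refine Finset.sum_eq_zero fun z hz => if_neg ?_
          intro h
          rw [hins] at h
          obtain ⟨a, ha, b, hb, hab, haS, hbS⟩ := hE
          exact hab ((h a haS (Or.inl ha)).trans (h b hbS (Or.inr hb)).symm)
        rw [this, if_pos hE]; simp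
      · have : ∑ z ∈ X ∩ Y, (if S ⊆ insert z (X ∪ Y)ᶜ then (1 : ℝ) else 0)
            ≤ ∑ z ∈ X ∩ Y, (if z = x then (1 : ℝ) else 0) := by
          refine Finset.sum_le_sum fun z hz => ?_
          by_cases h : S ⊆ insert z (X ∪ Y)ᶜ
          · have hz := (hins z).mp h x hxS (Or.inl hxX)
            rw [if_pos h, if_pos hz.symm]
          · rw [if_neg h]; split_ifs <;> norm_num
        rw [if_neg hE]
        have h2 : ∑ z ∈ X ∩ Y, (if z = x then (1 : ℝ) else 0) ≤ 1 := by
          rw [Finset.sum_ite_eq']; split_ifs <;> norm_num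
        linarith

theorem prDP_bound (hZ : Z * Zᵀ = 1) (X Y : Finset (Fin N)) :
    prDP Z {K | ∃ x ∈ X, ∃ y ∈ Y, x ≠ y ∧ x ∈ K ∧ y ∈ K} ≤
    1 - subP Z Xᶜ - subP Z Yᶜ + subP Z (X ∪ Y)ᶜ
      - ∑ z ∈ X ∩ Y, (subP Z (insert z (X ∪ Y)ᶜ) - subP Z (X ∪ Y)ᶜ) := by
  classical
  have h1 : (1 : ℝ) = ∑ S : Finset (Fin N), 1 * detSq Z S := by
    have := subP_univ Z hZ
    simp only [subP, Finset.subset_univ, if_true] at this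
    simp [this]
  rw [h1]
  simp only [subP_eq', ← Finset.sum_sub_distrib, ← Finset.sum_add_distrib, ← sub_mul, ← add_mul]
  rw [Finset.sum_comm]
  simp only [← Finset.sum_mul]
  rw [← Finset.sum_sub_distrib, prDP]
  refine Finset.sum_le_sum fun S _ => ?_
  rw [← sub_mul]
  have := mul_le_mul_of_nonneg_right (point_bound X Y S) (detSq_nonneg Z S)
  refine le_trans (le_of_eq ?_) this
  simp only [Set.mem_ofPred_eq, ite_mul, one_mul, zero_mul]
  congr
end

/-- the van den Berg–Kesten inequality for increasing events generated by
simple points: P(φ ∈ 𝔄∘𝔅) ≤ P(φ ∈ 𝔄) · P(φ ∈ 𝔅). -/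
theorem bk_inequality_simple_points {N p : ℕ} (hp : 1 < p) (hpN : p < N)
    (Z : Matrix (Fin p) (Fin N) ℝ) (hZ : Z * Zᵀ = 1)
    (X Y : Finset (Fin N)) (hX : X.Nonempty) (hY : Y.Nonempty) :
    prDP Z {K | ∃ x ∈ X, ∃ y ∈ Y, x ≠ y ∧ x ∈ K ∧ y ∈ K}
      ≤ prDP Z {A | (A ∩ X).Nonempty} * prDP Z {A | (A ∩ Y).Nonempty} := by
  refine (prDP_bound Z hZ X Y).trans ?_
  rw [prDP_hit Z hZ, prDP_hit Z hZ]
  have hu := subP_univ Z hZ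
  have ha := subP_submod Z Xᶜ Yᶜ
  rw [← Finset.compl_inter, ← Finset.compl_union] at ha
  have hb := mul_le_mul_of_nonneg_right (union_bound Z hZ (X ∩ Y)) (subP_nonneg Z (X ∪ Y)ᶜ)
  have hc : (∑ z ∈ X ∩ Y, (1 - subP Z {z}ᶜ)) * subP Z (X ∪ Y)ᶜ
      ≤ ∑ z ∈ X ∩ Y, (subP Z (insert z (X ∪ Y)ᶜ) - subP Z (X ∪ Y)ᶜ) := by
    rw [Finset.sum_mul]
    refine Finset.sum_le_sum fun z hz => ?_
    have hs := subP_submod Z (insert z (X ∪ Y)ᶜ) {z}ᶜ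
    have hz' : z ∈ X ∪ Y := Finset.mem_union_left _ (Finset.mem_inter.mp hz).1
    have e1 : insert z (X ∪ Y)ᶜ ∪ {z}ᶜ = Finset.univ := by
      ext a; by_cases h : a = z <;> simp [h]
    have e2 : insert z (X ∪ Y)ᶜ ∩ {z}ᶜ = (X ∪ Y)ᶜ := by
      ext a
      by_cases h : a = z
      · subst h; simp only [Finset.mem_inter, Finset.mem_compl, hz', Finset.mem_singleton]; simp
      · simp [h]
    rw [e1, e2, hu] at hs
    have h1 : subP Z {z}ᶜ ≤ 1 := hu ▸ subP_mono Z (Finset.subset_univ _)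
    have h2 := subP_mono Z (Finset.subset_insert z (X ∪ Y)ᶜ)
    have h3 := mul_le_mul_of_nonneg_left h2 (sub_nonneg.mpr h1)
    linarith
  linarith
end

section
/- Let X, Y ⊆ {1,…,N} be nonempty sets and let 𝔄 = {A : A ∩ X ≠ ∅}, 𝔅 = {A : A ∩ Y ≠ ∅} be the increasing events generated by their simple points. Suppose that for every q with 1 ≤ q < N and every q × N real matrix W with orthonormal rows, the associated determinantal process ψ = φ(W) satisfies P(ψ ∈ 𝔄∘𝔅) ≤ P(ψ ∈ 𝔄) · P(ψ ∈ 𝔅). Let x₀ ∈ {1,…,N} with x₀ ∉ X ∪ Y, and let 𝔄̃ = {A : A ∩ (X ∪ {x₀}) ≠ ∅} be the increasing event generated by x₀ together with the points of X. Then for every q with 1 ≤ q < N and every q × N real matrix W with orthonormal rows, P(ψ ∈ 𝔄̃∘𝔅) ≤ P(ψ ∈ 𝔄̃) · P(ψ ∈ 𝔅), where for increasing events 𝔄, 𝔅 the disjoint intersection is 𝔄∘𝔅 = {K ⊆ {1,…,N} : ∃ nonempty L ∈ 𝔄 and M ∈ 𝔅 with L ∩ M = ∅ and L ∪ M ⊆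 K}. -/
open Matrix

/-- The disjoint intersection 𝔄∘𝔅 of two events: the family of all K containing the
union of a nonempty L ∈ 𝔄 and a nonempty M ∈ 𝔅 with L ∩ M = ∅. -/
def disjInt {N : ℕ} (A B : Set (Finset (Fin N))) : Set (Finset (Fin N)) :=
  {K | ∃ L M : Finset (Fin N),
    L ∈ A ∧ M ∈ B ∧ L.Nonempty ∧ M.Nonempty ∧ Disjoint L M ∧ L ∪ M ⊆ K}


theorem cauchy_binet_fiber {q N : ℕ} (Z : Matrix (Fin q) (Fin N) ℝ) (S : Finset (Fin N)) :
    (∑ p : Fin q → Fin N with Finset.univ.image p = S,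
      (∏ i, Z i (p i)) * (Z.submatrix id p).det) = detSq Z S := by
  unfold detSq
  split_ifs with h
  · have key : ∀ τ : Equiv.Perm (Fin q),
        (Z.submatrix id (fun i => ((S.orderIsoOfFin h (τ i) : S) : Fin N))).det
        = (Equiv.Perm.sign τ : ℤ) *
          (Matrix.of fun i j : Fin q => Z i ((S.orderIsoOfFin h j : Fin N))).det := by
      intro τ
      rw [← Matrix.det_permute']
      rfl
    have hdet : (Matrix.of fun i j : Fin q => Z i ((S.orderIsoOfFin h j : Fin N))).det
        = ∑ τ : Equiv.Perm (Fin q), (Equiv.Perm.sign τ : ℤ) *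
          ∏ i, Z i ((S.orderIsoOfFin h (τ i) : Fin N)) := by
      rw [← Matrix.det_transpose, Matrix.det_apply']
      rfl
    have hsum : (∑ p : Fin q → Fin N with Finset.univ.image p = S,
      (∏ i, Z i (p i)) * (Z.submatrix id p).det)
      = ∑ τ : Equiv.Perm (Fin q), (∏ i, Z i ((S.orderIsoOfFin h (τ i) : Fin N))) *
        (Z.submatrix id (fun i => ((S.orderIsoOfFin h (τ i) : S) : Fin N))).det := by
      symm
      refine Finset.sum_bij (fun τ _ => fun i => ((S.orderIsoOfFin h (τ i) : S) : Fin N))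
        ?_ ?_ ?_ ?_
      · intro τ _
        simp only [Finset.mem_filter, Finset.mem_univ, true_and]
        ext x
        simp only [Finset.mem_image, Finset.mem_univ, true_and]
        constructor
        · rintro ⟨i, rfl⟩
          exact (S.orderIsoOfFin h (τ i)).2
        · intro hx
          refine ⟨τ.symm ((S.orderIsoOfFin h).symm ⟨x, hx⟩), ?_⟩
          simp
      · intro τ _ τ' _ he
        ext i : 1
        have := congrFun he i
        exact (S.orderIsoOfFin h).injective (Subtype.ext this)
      · intro p hp
        simp only [Finset.mem_filter, Finset.mem_univ, true_and] at hp
        have hmem : ∀ i, p i ∈ S := fun i => hp ▸ Finset.mem_image_of_mem p (Finset.mem_univ i)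
        have hinj : Function.Injective p := by
          have : Set.InjOn p (Finset.univ : Finset (Fin q)) := by
            apply Finset.injOn_of_card_image_eq
            rw [hp, h]; simp
          intro a b hab
          exact this (by simp) (by simp) hab
        have hinj2 : Function.Injective
            (fun i => (S.orderIsoOfFin h).symm ⟨p i, hmem i⟩) := by
          intro a b hab
          have := (S.orderIsoOfFin h).symm.injective hab
          exact hinj (congrArg Subtype.val this)
        refine ⟨Equiv.ofBijective _ (Finite.injective_iff_bijective.mp hinj2),
          Finset.mem_univ _, ?_⟩
        funext i
        simp
      · intro τ _
        rfl
    rw [hsum, sq]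
    nth_rewrite 1 [hdet]
    rw [Finset.sum_mul]
    refine Finset.sum_congr rfl fun τ _ => ?_
    rw [key]
    ring
  · apply Finset.sum_eq_zero
    intro p hp
    simp only [Finset.mem_filter, Finset.mem_univ, true_and] at hp
    have hninj : ¬ Function.Injective p := by
      intro hinj
      apply h
      rw [← hp, Finset.card_image_of_injective _ hinj]
      simp
    simp only [Function.Injective, not_forall] at hninj
    obtain ⟨a, b, hab, hne⟩ := hninj
    rw [Matrix.det_zero_of_column_eq hne, mul_zero]
    intro k
    simp [hab]

theorem cauchy_binet {q N : ℕ} (Z : Matrix (Fin q) (Fin N) ℝ) :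
    ∑ S : Finset (Fin N), detSq Z S = (Z * Zᵀ).det := by
  have h1 : (Z * Zᵀ).det
      = ∑ p : Fin q → Fin N, (∏ i, Z i (p i)) * (Z.submatrix id p).det := by
    simp only [Matrix.det_apply', Matrix.mul_apply, Finset.prod_univ_sum, Finset.mul_sum,
      Fintype.piFinset_univ]
    rw [Finset.sum_comm]
    refine Finset.sum_congr rfl fun p _ => Finset.sum_congr rfl fun σ _ => ?_
    simp only [Matrix.transpose_apply, Matrix.submatrix_apply, id, Finset.prod_mul_distrib]
    ring
  rw [h1, ← Finset.sum_fiberwise Finset.univ (fun p : Fin q → Fin N => Finset.univ.image p)]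
  exact Finset.sum_congr rfl fun S _ => (cauchy_binet_fiber Z S).symm

theorem detSq_mul {q N : ℕ} (M : Matrix (Fin q) (Fin q) ℝ) (Z : Matrix (Fin q) (Fin N) ℝ)
    (S : Finset (Fin N)) : detSq (M * Z) S = M.det ^ 2 * detSq Z S := by
  unfold detSq
  split_ifs with h
  · rw [← mul_pow, ← Matrix.det_mul]
    rfl
  · simp

/-- Zero out the columns outside of `T`. -/
def colRestrict {q N : ℕ} (Z : Matrix (Fin q) (Fin N) ℝ) (T : Finset (Fin N)) :
    Matrix (Fin q) (Fin N) ℝ :=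
  Matrix.of fun i j => if j ∈ T then Z i j else 0

theorem detSq_colRestrict {q N : ℕ} (Z : Matrix (Fin q) (Fin N) ℝ) (T S : Finset (Fin N)) :
    detSq (colRestrict Z T) S = if S ⊆ T then detSq Z S else 0 := by
  unfold detSq
  by_cases h : S.card = q
  · simp only [h, dif_pos]
    split_ifs with hs
    · congr 2
      ext i j
      simp [colRestrict, -Finset.coe_orderIsoOfFin_apply, hs (S.orderIsoOfFin h j).2]
    · rw [Finset.not_subset] at hs
      obtain ⟨x, hxS, hxT⟩ := hs
      rw [Matrix.det_eq_zero_of_column_eq_zero ((S.orderIsoOfFin h).symm ⟨x, hxS⟩)]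
      · simp
      · intro i
        simp [colRestrict, -Finset.coe_orderIsoOfFin_apply, hxT]
  · simp [h]

theorem prDP_mul {q N : ℕ} (M : Matrix (Fin q) (Fin q) ℝ) (Z : Matrix (Fin q) (Fin N) ℝ)
    (E : Set (Finset (Fin N))) : prDP (M * Z) E = M.det ^ 2 * prDP Z E := by
  classical
  unfold prDP
  rw [Finset.mul_sum]
  refine Finset.sum_congr rfl fun S _ => ?_
  rw [detSq_mul]
  split_ifs <;> simp

theorem prDP_colRestrict {q N : ℕ} (Z : Matrix (Fin q) (Fin N) ℝ) (T : Finset (Fin N))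
    (E : Set (Finset (Fin N))) : prDP (colRestrict Z T) E = prDP Z (E ∩ {S | S ⊆ T}) := by
  classical
  unfold prDP
  refine Finset.sum_congr rfl fun S _ => ?_
  rw [detSq_colRestrict]
  by_cases h1 : S ∈ E <;> by_cases h2 : S ⊆ T <;> simp [h1, h2]

theorem prDP_subset {q N : ℕ} (Z : Matrix (Fin q) (Fin N) ℝ) (T : Finset (Fin N)) :
    prDP Z {S | S ⊆ T} = (colRestrict Z T * (colRestrict Z T)ᵀ).det := by
  have h := prDP_colRestrict Z T Set.univ
  rw [Set.univ_inter] at h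
  rw [← h, ← cauchy_binet]
  simp [prDP]

theorem prDP_univ {q N : ℕ} (Z : Matrix (Fin q) (Fin N) ℝ) (hZ : Z * Zᵀ = 1) :
    prDP Z Set.univ = 1 := by
  have h := cauchy_binet Z
  rw [hZ, Matrix.det_one] at h
  simpa [prDP] using h

theorem prDP_nonneg {q N : ℕ} (Z : Matrix (Fin q) (Fin N) ℝ) (E : Set (Finset (Fin N))) :
    0 ≤ prDP Z E := by
  unfold prDP
  refine Finset.sum_nonneg fun S _ => ?_
  split_ifs
  · exact detSq_nonneg _ _
  · exact le_rfl

theorem prDP_mono {q N : ℕ} (Z : Matrix (Fin q) (Fin N) ℝ) {E F : Set (Finset (Fin N))}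
    (h : E ⊆ F) : prDP Z E ≤ prDP Z F := by
  unfold prDP
  refine Finset.sum_le_sum fun S _ => ?_
  by_cases h1 : S ∈ E
  · simp [h1, h h1]
  · simp only [h1, if_false]
    split_ifs
    · exact detSq_nonneg _ _
    · exact le_rfl

theorem prDP_split {q N : ℕ} (Z : Matrix (Fin q) (Fin N) ℝ) (E F : Set (Finset (Fin N))) :
    prDP Z E = prDP Z (E ∩ F) + prDP Z (E ∩ Fᶜ) := by
  unfold prDP
  rw [← Finset.sum_add_distrib]
  refine Finset.sum_congr rfl fun S _ => ?_
  by_cases h1 : S ∈ E <;> by_cases h2 : S ∈ F <;> simp [h1, h2]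

theorem gram_erase {q N : ℕ} (Z : Matrix (Fin q) (Fin N) ℝ) (T : Finset (Fin N)) (x : Fin N)
    (hx : x ∈ T) :
    colRestrict Z (T.erase x) * (colRestrict Z (T.erase x))ᵀ
      = colRestrict Z T * (colRestrict Z T)ᵀ
        + replicateCol Unit (fun i => - Z i x) * replicateRow Unit (fun i => Z i x) := by
  ext i j
  have h : ∀ U : Finset (Fin N), (colRestrict Z U * (colRestrict Z U)ᵀ) i j
      = ∑ k ∈ U, Z i k * Z j k := by
    intro U
    simp only [colRestrict, Matrix.mul_apply, Matrix.transpose_apply, Matrix.of_apply]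
    rw [← Finset.sum_subset (Finset.subset_univ U)]
    · exact Finset.sum_congr rfl fun k hk => by simp [hk]
    · intro k _ hk
      simp [hk]
  rw [Matrix.add_apply, h, h, ← Finset.add_sum_erase T _ hx]
  simp [Matrix.mul_apply]

theorem det_gram_erase {q N : ℕ} (Z : Matrix (Fin q) (Fin N) ℝ) (T : Finset (Fin N)) (x : Fin N)
    (hx : x ∈ T) (hdet : (colRestrict Z T * (colRestrict Z T)ᵀ).det ≠ 0) :
    (colRestrict Z (T.erase x) * (colRestrict Z (T.erase x))ᵀ).det
      = (colRestrict Z T * (colRestrict Z T)ᵀ).det *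
        (1 - (fun i => Z i x) ⬝ᵥ
          ((colRestrict Z T * (colRestrict Z T)ᵀ)⁻¹ *ᵥ (fun i => Z i x))) := by
  rw [gram_erase Z T x hx, Matrix.det_add_replicateCol_mul_replicateRow (isUnit_iff_ne_zero.mpr hdet)]
  congr 1
  rw [Matrix.det_unique, Matrix.mul_assoc, ← Matrix.replicateCol_mulVec, Matrix.add_apply,
    Matrix.replicateRow_mul_replicateCol_apply]
  have : (fun i => - Z i x) = - (fun i => Z i x) := rfl
  rw [this, Matrix.mulVec_neg, dotProduct_neg]
  simp [sub_eq_add_neg]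

theorem norm_contract {q N : ℕ} (W : Matrix (Fin q) (Fin N) ℝ) (hW : W * Wᵀ = 1)
    (u : Fin N → ℝ) : (W *ᵥ u) ⬝ᵥ (W *ᵥ u) ≤ u ⬝ᵥ u := by
  have h0 : 0 ≤ (u - Wᵀ *ᵥ (W *ᵥ u)) ⬝ᵥ (u - Wᵀ *ᵥ (W *ᵥ u)) :=
    Finset.sum_nonneg fun i _ => mul_self_nonneg _
  have h1 : u ⬝ᵥ (Wᵀ *ᵥ (W *ᵥ u)) = (W *ᵥ u) ⬝ᵥ (W *ᵥ u) := by
    rw [Matrix.dotProduct_mulVec, Matrix.vecMul_transpose]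
  have h2 : (Wᵀ *ᵥ (W *ᵥ u)) ⬝ᵥ (Wᵀ *ᵥ (W *ᵥ u)) = (W *ᵥ u) ⬝ᵥ (W *ᵥ u) := by
    rw [Matrix.dotProduct_mulVec, Matrix.vecMul_transpose, Matrix.mulVec_mulVec, hW,
      Matrix.one_mulVec]
  rw [sub_dotProduct, dotProduct_sub, dotProduct_sub, dotProduct_comm (Wᵀ *ᵥ (W *ᵥ u)) u,
    h1, h2] at h0
  linarith

theorem colRestrict_univ {q N : ℕ} (Z : Matrix (Fin q) (Fin N) ℝ) :
    colRestrict Z Finset.univ = Z := by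
  ext i j
  simp [colRestrict]

theorem neg_corr {q N : ℕ} (W : Matrix (Fin q) (Fin N) ℝ) (hW : W * Wᵀ = 1)
    (T : Finset (Fin N)) (x : Fin N) (hx : x ∈ T) :
    prDP W {S | S ⊆ T.erase x} ≤ prDP W {S | S ⊆ T} * prDP W {S | S ⊆ Finset.univ.erase x} := by
  have hsub : prDP W {S | S ⊆ T.erase x} ≤ prDP W {S | S ⊆ T} :=
    prDP_mono W fun S hS => Finset.Subset.trans hS (Finset.erase_subset _ _)
  by_cases hdet : prDP W {S | S ⊆ T} = 0
  · rw [hdet] at hsub ⊢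
    linarith
  have hpos := prDP_nonneg W {S | S ⊆ T}
  have hu := prDP_subset W (Finset.univ.erase x)
  rw [det_gram_erase W Finset.univ x (Finset.mem_univ x) (by rw [colRestrict_univ, hW]; simp),
    colRestrict_univ, hW] at hu
  simp only [Matrix.det_one, inv_one, Matrix.one_mulVec, one_mul] at hu
  rw [prDP_subset W T] at hdet
  have ht := prDP_subset W (T.erase x)
  rw [det_gram_erase W T x hx hdet, ← prDP_subset W T] at ht
  rw [ht, hu]
  refine mul_le_mul_of_nonneg_left ?_ hpos
  set w : Fin q → ℝ := fun i => W i x with hw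
  set R := colRestrict W T with hR
  set v := (R * Rᵀ)⁻¹ *ᵥ w with hv
  have hGv : (R * Rᵀ) *ᵥ v = w := by
    rw [hv, Matrix.mulVec_mulVec, Matrix.mul_nonsing_inv _ (isUnit_iff_ne_zero.mpr hdet),
      Matrix.one_mulVec]
  have hRW : R *ᵥ (Rᵀ *ᵥ v) = W *ᵥ (Rᵀ *ᵥ v) := by
    ext i
    simp only [Matrix.mulVec, dotProduct, hR, colRestrict, Matrix.of_apply, Matrix.transpose_apply]
    refine Finset.sum_congr rfl fun k _ => ?_
    by_cases hk : k ∈ T <;> simp [hk]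
  have hc := norm_contract W hW (Rᵀ *ᵥ v)
  rw [← hRW, Matrix.mulVec_mulVec, hGv] at hc
  have h3 : (Rᵀ *ᵥ v) ⬝ᵥ (Rᵀ *ᵥ v) = w ⬝ᵥ v := by
    rw [Matrix.dotProduct_mulVec, Matrix.vecMul_transpose, Matrix.mulVec_mulVec, hGv]
  linarith

open scoped MatrixOrder in
theorem exists_normalize {q N : ℕ} (R : Matrix (Fin q) (Fin N) ℝ) (h : (R * Rᵀ).det ≠ 0) :
    ∃ M : Matrix (Fin q) (Fin q) ℝ, (M * R) * (M * R)ᵀ = 1 ∧ M.det ^ 2 * (R * Rᵀ).det = 1 := by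
  have hps : (R * Rᵀ).PosSemidef := by
    simpa using Matrix.posSemidef_self_mul_conjTranspose R
  obtain ⟨B, hB⟩ := CStarAlgebra.nonneg_iff_eq_star_mul_self.mp hps.nonneg
  have hB' : R * Rᵀ = Bᵀ * B := by
    rw [hB, Matrix.star_eq_conjTranspose, Matrix.conjTranspose_eq_transpose_of_trivial]
  have hBd : IsUnit B.det := by
    rw [hB', Matrix.det_mul] at h
    exact isUnit_iff_ne_zero.mpr (right_ne_zero_of_mul h)
  have hBd' : IsUnit Bᵀ.det := by rwa [Matrix.det_transpose]
  have hone : (Bᵀ⁻¹ * R) * (Bᵀ⁻¹ * R)ᵀ = 1 := by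
    rw [Matrix.transpose_mul, Matrix.mul_assoc, ← Matrix.mul_assoc R, hB',
      Matrix.transpose_nonsing_inv, Matrix.transpose_transpose, Matrix.mul_assoc Bᵀ,
      Matrix.mul_nonsing_inv _ hBd, Matrix.mul_one, Matrix.nonsing_inv_mul _ hBd']
  refine ⟨Bᵀ⁻¹, hone, ?_⟩
  have := congrArg Matrix.det hone
  rw [Matrix.transpose_mul, Matrix.mul_assoc, ← Matrix.mul_assoc R, Matrix.det_mul, Matrix.det_mul,
    Matrix.det_transpose, Matrix.det_one] at this
  linarith

/-- Lemma 4: if the BK inequality holds for the increasing events generated by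
the simple points of X and Y, for every discrete determinantal process on {1,…,N}, then it
still holds after adjoining to X one extra point x₀ ∉ X ∪ Y. -/
theorem bk_extend_by_point {N : ℕ} (hN : 1 < N)
    (X Y : Finset (Fin N)) (hX : X.Nonempty) (hY : Y.Nonempty)
    (hBK : ∀ q : ℕ, 1 ≤ q → q < N → ∀ W : Matrix (Fin q) (Fin N) ℝ, W * Wᵀ = 1 →
      prDP W (disjInt {A | (A ∩ X).Nonempty} {A | (A ∩ Y).Nonempty})
        ≤ prDP W {A | (A ∩ X).Nonempty} * prDP W {A | (A ∩ Y).Nonempty})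
    (x₀ : Fin N) (hx₀ : x₀ ∉ X ∪ Y) :
    ∀ q : ℕ, 1 ≤ q → q < N → ∀ W : Matrix (Fin q) (Fin N) ℝ, W * Wᵀ = 1 →
      prDP W (disjInt {A | (A ∩ (X ∪ {x₀})).Nonempty} {A | (A ∩ Y).Nonempty})
        ≤ prDP W {A | (A ∩ (X ∪ {x₀})).Nonempty} * prDP W {A | (A ∩ Y).Nonempty} := by
  intro q hq1 hqN W hW
  simp only [Finset.mem_union, not_or] at hx₀
  obtain ⟨hxX, hxY⟩ := hx₀
  set EA : Set (Finset (Fin N)) := {A | (A ∩ X).Nonempty} with hEA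
  set EB : Set (Finset (Fin N)) := {A | (A ∩ Y).Nonempty} with hEB
  set EA' : Set (Finset (Fin N)) := {A | (A ∩ (X ∪ {x₀})).Nonempty} with hEA'
  set F : Set (Finset (Fin N)) := {S | S ⊆ Finset.univ.erase x₀} with hF
  have memF : ∀ S, S ∈ F ↔ x₀ ∉ S := by
    intro S
    simp [hF, Finset.subset_erase]
  -- neg correlation
  have hneg := neg_corr W hW Yᶜ x₀ (by simpa using hxY)
  have hBc : {S : Finset (Fin N) | S ⊆ Yᶜ} = EBᶜ := by
    ext S
    simp [hEB, Finset.not_nonempty_iff_eq_empty, ← Finset.disjoint_iff_inter_eq_empty,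
      Finset.subset_compl_iff_disjoint_right]
  have hBcF : {S : Finset (Fin N) | S ⊆ Yᶜ.erase x₀} = F ∩ EBᶜ := by
    ext S
    rw [Set.mem_inter_iff, memF, ← hBc]
    simp [Finset.subset_erase, and_comm]
  rw [hBc, hBcF] at hneg
  have huniv := prDP_univ W hW
  have s1 := prDP_split W Set.univ EB
  have s2 := prDP_split W F EB
  have s3 := prDP_split W EB F
  have s4 := prDP_split W EA' F
  have s5 := prDP_split W Set.univ F
  have s6 := prDP_split W (disjInt EA' EB) F
  rw [Set.univ_inter, Set.univ_inter] at s1 s5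
  rw [Set.inter_comm F EB] at s2
  have e1 : EA' ∩ F = EA ∩ F := by
    ext S
    simp only [Set.mem_inter_iff, memF]
    refine and_congr_left fun hS => ?_
    have : S ∩ (X ∪ {x₀}) = S ∩ X := by
      rw [Finset.inter_union_distrib_left, Finset.inter_singleton_of_notMem hS,
        Finset.union_empty]
    rw [hEA, hEA', Set.mem_setOf_eq, Set.mem_setOf_eq, this]
  have e2 : EA' ∩ Fᶜ = Fᶜ := by
    ext S
    simp only [Set.mem_inter_iff, Set.mem_compl_iff, memF, not_not, and_iff_right_iff_imp]
    intro hS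
    exact ⟨x₀, by simp [hS]⟩
  have e3 : disjInt EA' EB ∩ F ⊆ disjInt EA EB ∩ F := by
    rintro S ⟨⟨L, M, hL, hM, hLn, hMn, hd, hs⟩, hSF⟩
    refine ⟨⟨L, M, ?_, hM, hLn, hMn, hd, hs⟩, hSF⟩
    have hxL : x₀ ∉ L := fun h => (memF S).1 hSF (hs (Finset.mem_union_left _ h))
    have : L ∈ EA' ∩ F := ⟨hL, (memF L).2 hxL⟩
    rw [e1] at this
    exact this.1
  have e4 : disjInt EA' EB ∩ Fᶜ ⊆ EB ∩ Fᶜ := by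
    rintro S ⟨⟨L, M, hL, hM, hLn, hMn, hd, hs⟩, hSF⟩
    refine ⟨?_, hSF⟩
    obtain ⟨y, hy⟩ := hM
    rw [Finset.mem_inter] at hy
    exact ⟨y, Finset.mem_inter.2 ⟨hs (Finset.mem_union_right _ hy.1), hy.2⟩⟩
  have m3 := prDP_mono W e3
  have m4 := prDP_mono W e4
  have hcF := prDP_mono W (Set.inter_subset_right : disjInt EA EB ∩ F ⊆ F)
  have haF := prDP_mono W (Set.inter_subset_right : EA ∩ F ⊆ F)
  have hbF := prDP_mono W (Set.inter_subset_right : EB ∩ F ⊆ F)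
  have hc0 := prDP_nonneg W (disjInt EA EB ∩ F)
  have ha0 := prDP_nonneg W (EA ∩ F)
  have hb0 := prDP_nonneg W (EB ∩ F)
  have hu0 := prDP_nonneg W F
  rw [e1, e2] at s4
  rw [s6, s4]
  have hFc : prDP W Fᶜ = 1 - prDP W F := by linarith
  have hB1 : prDP W (EB ∩ Fᶜ) = prDP W EB - prDP W (EB ∩ F) := by linarith
  rw [hFc]
  rw [hB1] at m4
  have hnc : prDP W F * prDP W EB ≤ prDP W (EB ∩ F) := by
    have : prDP W EBᶜ = 1 - prDP W EB := by linarith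
    rw [this] at hneg
    nlinarith
  by_cases hu : prDP W F = 0
  · have h1 : prDP W (EA ∩ F) = 0 := by linarith
    rw [hu, h1]
    linarith
  have hupos : 0 < prDP W F := lt_of_le_of_ne hu0 (Ne.symm hu)
  have hbk : prDP W (disjInt EA EB ∩ F) * prDP W F ≤ prDP W (EA ∩ F) * prDP W (EB ∩ F) := by
    have hFdet := prDP_subset W (Finset.univ.erase x₀)
    obtain ⟨M, hM1, hM2⟩ := exists_normalize (colRestrict W (Finset.univ.erase x₀))
      (by rw [← hFdet]; exact hu)
    rw [← hFdet] at hM2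
    have h := hBK q hq1 hqN _ hM1
    simp only [prDP_mul, prDP_colRestrict] at h
    have h' := mul_le_mul_of_nonneg_right h (sq_nonneg (prDP W F))
    calc prDP W (disjInt EA EB ∩ F) * prDP W F
        = (M.det ^ 2 * prDP W F) * (prDP W (disjInt EA EB ∩ F) * prDP W F) := by
          rw [hM2, one_mul]
      _ = M.det ^ 2 * prDP W (disjInt EA EB ∩ F) * prDP W F ^ 2 := by ring
      _ ≤ _ := h'
      _ = (M.det ^ 2 * prDP W F) * (M.det ^ 2 * prDP W F) *
          (prDP W (EA ∩ F) * prDP W (EB ∩ F)) := by ring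
      _ = _ := by rw [hM2]; ring
  refine le_trans (add_le_add m3 m4) ?_
  refine le_of_mul_le_mul_right ?_ hupos
  nlinarith [mul_nonneg (sub_nonneg.2 haF) (sub_nonneg.2 hnc)]
end

section
/- Let x₁,…,xₙ ∈ {1,…,N} be distinct points with n ≥ 2. Then P({x₁,…,xₙ} ⊆ φᶜ)^{n−1} ≤ ∏_{i=1}^{n} P({x_j : j ≠ i} ⊆ φᶜ). -/
open Matrix

lemma aux_fiber {p N : ℕ} (Z : Matrix (Fin p) (Fin N) ℝ) (w : Fin N → ℝ) (S : Finset (Fin N)) :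
    (∑ f : Fin p → Fin N with Finset.image f Finset.univ = S,
      (∏ i, (w (f i) * Z i (f i))) * Matrix.det (Matrix.of fun i j => Z j (f i)))
      = (∏ k ∈ S, w k) * detSq Z S := by
  classical
  unfold detSq
  split_ifs with h
  · set e : Fin p → Fin N := fun j => (S.orderIsoOfFin h j : Fin N) with he
    have hinj : Function.Injective e := fun a b hab =>
      (S.orderIsoOfFin h).injective (Subtype.ext hab)
    have himg : Finset.image e Finset.univ = S := by
      have := Finset.image_orderEmbOfFin_univ S h
      simpa [he] using this
    have hw : ∏ k ∈ S, w k = ∏ i, w (e i) := by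
      conv_lhs => rw [← himg]
      rw [Finset.prod_image (fun a _ b _ hab => hinj hab)]
    have key : (∑ f : Fin p → Fin N with Finset.image f Finset.univ = S,
        (∏ i, (w (f i) * Z i (f i))) * Matrix.det (Matrix.of fun i j => Z j (f i)))
        = ∑ σ : Equiv.Perm (Fin p),
        (∏ i, (w (e (σ i)) * Z i (e (σ i)))) *
          Matrix.det (Matrix.of fun i j => Z j (e (σ i))) := by
      symm
      refine Finset.sum_bij (fun σ _ => fun i => e (σ i)) ?_ ?_ ?_ ?_
      · intro σ _
        simp only [Finset.mem_filter, Finset.mem_univ, true_and]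
        rw [← himg]
        ext k
        simp only [Finset.mem_image, Finset.mem_univ, true_and]
        constructor
        · rintro ⟨a, rfl⟩; exact ⟨_, rfl⟩
        · rintro ⟨a, rfl⟩; exact ⟨σ.symm a, by simp⟩
      · intro σ _ τ _ hστ
        ext i
        exact congrArg Fin.val (hinj (congrFun hστ i))
      · intro f hf
        simp only [Finset.mem_filter, Finset.mem_univ, true_and] at hf
        have hfinj : Function.Injective f := by
          have hc : (Finset.image f Finset.univ).card = (Finset.univ : Finset (Fin p)).card := by
            rw [hf, h]; simp
          have hon := Finset.card_image_iff.mp hc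
          intro a c hac
          exact hon (by simp) (by simp) hac
        have hmem : ∀ i, ∃ a, e a = f i := by
          intro i
          have : f i ∈ Finset.image e Finset.univ := by
            rw [himg, ← hf]; exact Finset.mem_image_of_mem _ (Finset.mem_univ _)
          simpa using this
        choose g hg using hmem
        have hginj : Function.Injective g := by
          intro a b hab
          apply hfinj
          rw [← hg, ← hg, hab]
        refine ⟨Equiv.ofBijective g (Finite.injective_iff_bijective.mp hginj), Finset.mem_univ _, ?_⟩
        funext i
        simp [hg]
      · intro σ _; rfl
    rw [key, hw]
    set D : Matrix (Fin p) (Fin p) ℝ := Matrix.of fun i j => Z i (e j) with hD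
    have h1 : ∀ σ : Equiv.Perm (Fin p),
        Matrix.det (Matrix.of fun i j => Z j (e (σ i))) = (Equiv.Perm.sign σ : ℤ) * D.det := by
      intro σ
      rw [← Matrix.det_transpose D, ← Matrix.det_permute]
      rfl
    have h2 : ∀ σ : Equiv.Perm (Fin p), ∏ i, w (e (σ i)) = ∏ i, w (e i) := fun σ =>
      Equiv.prod_comp σ (fun i => w (e i))
    have h3 : D.det = ∑ σ : Equiv.Perm (Fin p), ((Equiv.Perm.sign σ : ℤ) : ℝ) * ∏ i, Z i (e (σ i)) := by
      rw [← Matrix.det_transpose, Matrix.det_apply']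
      rfl
    rw [sq]
    conv_rhs => rw [← mul_assoc]; arg 1; rw [h3, Finset.mul_sum]
    rw [Finset.sum_mul]
    refine Finset.sum_congr rfl fun σ _ => ?_
    rw [h1, Finset.prod_mul_distrib, h2]
    ring
  · rw [mul_zero]
    refine Finset.sum_eq_zero fun f hf => ?_
    simp only [Finset.mem_filter, Finset.mem_univ, true_and] at hf
    have hni : ¬ Function.Injective f := by
      intro hfi
      apply h
      rw [← hf, Finset.card_image_of_injective _ hfi]
      simp
    simp only [Function.Injective, not_forall] at hni
    obtain ⟨a, b, hab, hne⟩ := hni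
    rw [Matrix.det_zero_of_row_eq hne, mul_zero]
    funext j
    simp [hab]

/-- weighted Cauchy-Binet -/
lemma aux_cauchyBinet {p N : ℕ} (Z : Matrix (Fin p) (Fin N) ℝ) (w : Fin N → ℝ) :
    Matrix.det (∑ k, w k • vecMulVec (fun i => Z i k) (fun i => Z i k))
      = ∑ S : Finset (Fin N), (∏ k ∈ S, w k) * detSq Z S := by
  classical
  have h0 : (∑ k, w k • vecMulVec (fun i => Z i k) (fun i => Z i k))
      = fun i => ∑ k, (w k * Z i k) • (fun j => Z j k) := by
    funext i j
    simp [Matrix.sum_apply, vecMulVec_apply, Finset.sum_apply, mul_assoc]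
  have h1 : Matrix.det (∑ k, w k • vecMulVec (fun i => Z i k) (fun i => Z i k))
      = ∑ f : Fin p → Fin N, (∏ i, (w (f i) * Z i (f i))) *
          Matrix.det (Matrix.of fun i j => Z j (f i)) := by
    rw [h0]
    have := (Matrix.detRowAlternating (R := ℝ) (n := Fin p)).toMultilinearMap.map_sum
      (fun (i : Fin p) (k : Fin N) => (w k * Z i k) • (fun j => Z j k))
    refine this.trans (Finset.sum_congr rfl fun f _ => ?_)
    rw [MultilinearMap.map_smul_univ]
    rfl
  rw [h1, ← Finset.sum_fiberwise (s := Finset.univ) (g := fun f : Fin p → Fin N => Finset.image f Finset.univ)]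
  exact Finset.sum_congr rfl fun S _ => aux_fiber Z w S

lemma aux_prDP {p N : ℕ} (Z : Matrix (Fin p) (Fin N) ℝ) (J : Finset (Fin N))
    (E : Set (Finset (Fin N))) (hE : ∀ S, S ∈ E ↔ ∀ k ∈ S, k ∉ J) :
    prDP Z E = Matrix.det (∑ k ∈ Jᶜ, vecMulVec (fun i => Z i k) (fun i => Z i k)) := by
  classical
  have := aux_cauchyBinet Z (fun k => if k ∈ J then 0 else 1)
  have h2 : (∑ k, (if k ∈ J then (0:ℝ) else 1) • vecMulVec (fun i => Z i k) (fun i => Z i k))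
      = ∑ k ∈ Jᶜ, vecMulVec (fun i => Z i k) (fun i => Z i k) := by
    rw [← Finset.sum_subset (Finset.subset_univ Jᶜ)]
    · refine Finset.sum_congr rfl fun k hk => ?_
      rw [if_neg (Finset.mem_compl.mp hk), one_smul]
    · intro k _ hk
      rw [if_pos (by simpa using hk), zero_smul]
  rw [h2] at this
  rw [this]
  unfold prDP
  refine Finset.sum_congr rfl fun S _ => ?_
  split_ifs with h
  · rw [Finset.prod_eq_one, one_mul]
    intro k hk
    rw [if_neg ((hE S).mp h k hk)]
  · rw [hE] at h
    push Not at h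
    obtain ⟨k, hk, hkJ⟩ := h
    rw [Finset.prod_eq_zero hk (by simp [hkJ]), zero_mul]

lemma aux_det_add {p : ℕ} {A : Matrix (Fin p) (Fin p) ℝ} (hA : A.PosDef) (z : Fin p → ℝ) :
    (A + vecMulVec z z).det = A.det * (1 + z ⬝ᵥ (A⁻¹ *ᵥ z)) := by
  have := Matrix.det_add_replicateCol_mul_replicateRow (ι := Unit) (A := A) hA.det_pos.ne'.isUnit z z
  rw [← vecMulVec_eq] at this
  rw [this, Matrix.det_unique (n := Unit)]
  congr 1
  simp [Matrix.add_apply, Matrix.mul_assoc, Matrix.mul_apply, dotProduct, mulVec]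

lemma aux_inv_mono {p : ℕ} {A C : Matrix (Fin p) (Fin p) ℝ} (hA : A.PosDef) (hC : C.PosSemidef)
    (z : Fin p → ℝ) : z ⬝ᵥ ((A + C)⁻¹ *ᵥ z) ≤ z ⬝ᵥ (A⁻¹ *ᵥ z) := by
  have hB : (A + C).PosDef := hA.add_posSemidef hC
  set u := (A + C)⁻¹ *ᵥ z with hu
  set v := A⁻¹ *ᵥ z with hv
  have h1 : (A + C) *ᵥ u = z := by
    rw [hu, mulVec_mulVec, Matrix.mul_nonsing_inv _ hB.det_pos.ne'.isUnit, one_mulVec]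
  have h2 : A *ᵥ v = z := by
    rw [hv, mulVec_mulVec, Matrix.mul_nonsing_inv _ hA.det_pos.ne'.isUnit, one_mulVec]
  have h3 : 0 ≤ (u - v) ⬝ᵥ (A *ᵥ (u - v)) := by
    simpa using hA.posSemidef.dotProduct_mulVec_nonneg (u - v)
  have h4 : 0 ≤ u ⬝ᵥ (C *ᵥ u) := by
    simpa using hC.dotProduct_mulVec_nonneg u
  have hAT : Aᵀ = A := by simpa [conjTranspose_eq_transpose_of_trivial] using hA.isHermitian.eq
  have h5 : v ⬝ᵥ (A *ᵥ u) = z ⬝ᵥ u := by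
    rw [dotProduct_mulVec, ← mulVec_transpose, hAT, h2]
  have h6 : u ⬝ᵥ (A *ᵥ u) + u ⬝ᵥ (C *ᵥ u) = z ⬝ᵥ u := by
    rw [← dotProduct_add, ← add_mulVec, h1, dotProduct_comm]
  rw [mulVec_sub, h2, dotProduct_sub, sub_dotProduct, sub_dotProduct, h5,
    dotProduct_comm u z, dotProduct_comm v z] at h3
  linarith

lemma aux_hadamard {p : ℕ} {ι : Type*} {A : Matrix (Fin p) (Fin p) ℝ} (hA : A.PosDef)
    (z : ι → Fin p → ℝ) (s : Finset ι) :
    (A + ∑ i ∈ s, vecMulVec (z i) (z i)).det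
      ≤ A.det * ∏ i ∈ s, (1 + z i ⬝ᵥ (A⁻¹ *ᵥ z i)) := by
  classical
  induction s using Finset.induction_on with
  | empty => simp
  | insert a s ha ih =>
    have hC : (∑ i ∈ s, vecMulVec (z i) (z i)).PosSemidef :=
      posSemidef_sum _ fun i _ => by simpa using posSemidef_vecMulVec_self_star (z i)
    have hB := hA.add_posSemidef hC
    rw [Finset.sum_insert ha, Finset.prod_insert ha, add_comm (vecMulVec _ _), ← add_assoc,
      aux_det_add hB]
    have h1 := aux_inv_mono hA hC (z a)
    have h0 : 0 ≤ z a ⬝ᵥ (A⁻¹ *ᵥ z a) := by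
      simpa using hA.inv.posSemidef.dotProduct_mulVec_nonneg (z a)
    calc _ ≤ (A + ∑ i ∈ s, vecMulVec (z i) (z i)).det * (1 + z a ⬝ᵥ (A⁻¹ *ᵥ z a)) := by
          apply mul_le_mul_of_nonneg_left _ hB.det_pos.le
          linarith
      _ ≤ (A.det * ∏ i ∈ s, (1 + z i ⬝ᵥ (A⁻¹ *ᵥ z i))) * (1 + z a ⬝ᵥ (A⁻¹ *ᵥ z a)) :=
          mul_le_mul_of_nonneg_right ih (by linarith)
      _ = _ := by ring

/-- for distinct points x₁,…,xₙ (n ≥ 2),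
P({x₁,…,xₙ} ⊆ φᶜ)^(n−1) ≤ ∏_{i=1}^{n} P({x_j : j ≠ i} ⊆ φᶜ). -/
theorem avoid_power_le_prod {N p n : ℕ} (hp : 1 < p) (hpN : p < N)
    (Z : Matrix (Fin p) (Fin N) ℝ) (hZ : Z * Zᵀ = 1)
    (hn : 2 ≤ n) (x : Fin n → Fin N) (hx : Function.Injective x) :
    (prDP Z {S | ∀ i : Fin n, x i ∉ S}) ^ (n - 1)
      ≤ ∏ i : Fin n, prDP Z {S | ∀ j : Fin n, j ≠ i → x j ∉ S} := by
  classical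
  set J : Finset (Fin N) := Finset.univ.image x with hJ
  set z : Fin N → Fin p → ℝ := fun k i => Z i k with hz
  set M : Matrix (Fin p) (Fin p) ℝ := ∑ k ∈ Jᶜ, vecMulVec (z k) (z k) with hM
  have hpsd : ∀ s : Finset (Fin N), (∑ k ∈ s, vecMulVec (z k) (z k)).PosSemidef := fun s =>
    posSemidef_sum _ fun k _ => by simpa using posSemidef_vecMulVec_self_star (z k)
  have e0 : prDP Z {S | ∀ i : Fin n, x i ∉ S} = M.det := by
    refine aux_prDP Z J _ fun S => ?_
    simp only [Set.mem_setOf_eq, hJ, Finset.mem_image, Finset.mem_univ, true_and, not_exists]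
    exact ⟨fun h k hk i hi => h i (hi ▸ hk), fun h i hi => h _ hi i rfl⟩
  have ei : ∀ i : Fin n, prDP Z {S | ∀ j : Fin n, j ≠ i → x j ∉ S}
      = (∑ k ∈ (J.erase (x i))ᶜ, vecMulVec (z k) (z k)).det := by
    intro i
    refine aux_prDP Z (J.erase (x i)) _ fun S => ?_
    simp only [Set.mem_setOf_eq, hJ, Finset.mem_erase, Finset.mem_image, Finset.mem_univ, true_and]
    constructor
    · rintro h k hk ⟨hne, j, rfl⟩
      exact h j (fun hji => hne (by rw [hji])) hk
    · intro h j hji hj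
      exact h _ hj ⟨fun he => hji (hx he), j, rfl⟩
  have ei' : ∀ i : Fin n, (∑ k ∈ (J.erase (x i))ᶜ, vecMulVec (z k) (z k))
      = M + vecMulVec (z (x i)) (z (x i)) := by
    intro i
    rw [Finset.compl_erase, Finset.sum_insert (by simp [hJ]), add_comm]
  rw [e0]
  by_cases hd : M.det = 0
  · rw [hd, zero_pow (by omega)]
    exact Finset.prod_nonneg fun i _ => by rw [ei]; exact (hpsd _).det_nonneg
  have hMpd : M.PosDef := by
    exact (hpsd _).posDef_iff_det_ne_zero.mpr hd
  have hone : M + ∑ i, vecMulVec (z (x i)) (z (x i)) = 1 := by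
    rw [← hZ]
    have : ∑ i, vecMulVec (z (x i)) (z (x i)) = ∑ k ∈ J, vecMulVec (z k) (z k) := by
      rw [hJ, Finset.sum_image (fun a _ b _ hab => hx hab)]
    rw [this, hM, Finset.sum_compl_add_sum]
    ext i j
    simp [Matrix.sum_apply, vecMulVec_apply, Matrix.mul_apply, hz]
  have hh := aux_hadamard hMpd (fun i => z (x i)) Finset.univ
  rw [hone, det_one] at hh
  have : ∏ i : Fin n, prDP Z {S | ∀ j : Fin n, j ≠ i → x j ∉ S}
      = M.det ^ (n - 1) * (M.det * ∏ i, (1 + z (x i) ⬝ᵥ (M⁻¹ *ᵥ z (x i)))) := by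
    simp_rw [ei, ei', aux_det_add hMpd, Finset.prod_mul_distrib]
    rw [Finset.prod_const, Finset.card_univ, Fintype.card_fin, ← mul_assoc, ← pow_succ,
      Nat.sub_add_cancel (by omega)]
  rw [this]
  exact le_mul_of_one_le_right (pow_nonneg hMpd.det_pos.le _) hh
end

section
/- Let x₁,…,xₙ ∈ {1,…,N} be distinct points with 2 ≤ n ≤ p, and suppose P({x₂,…,xₙ} ⊆ φᶜ) > 0. Let K = Zᵀ Z be the N × N kernel matrix with entries K_{ab} = ⟨z_a, z_b⟩, where z_a ∈ ℝᵖ is the a-th column of Z. For each subset T = {i₁ < … < i_k} of {x₂,…,x_{n−1}} let D(T) be the determinant of the (k + 1) × (k + 1) matrix whose rows are indexed by (x₁, i₁,…,i_k), whose columns are indexed by (xₙ, i₁,…,i_k), and whose (a, b)-entry is K_{ab} (so D(∅) = K_{x₁ xₙ}, and D(T) = ⟨z_{x₁} ∧ z_{i₁} ∧ … ∧ z_{i_k}, z_{xₙ} ∧ z_{i₁} ∧ … ∧ z_{i_k}⟩). Then (Σ_{T ⊆ {x₂,…,x_{n−1}}} (−1)^{|T|} D(T))² = P({x₂,…,xₙ}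 ⊆ φᶜ) · P({x₂,…,x_{n−1}} ⊆ φᶜ) · ( P(x₁ ∈ φ and {x₂,…,xₙ} ⊆ φᶜ) / P({x₂,…,xₙ} ⊆ φᶜ) − P(x₁ ∈ φ and {x₂,…,x_{n−1}} ⊆ φᶜ) / P({x₂,…,x_{n−1}} ⊆ φᶜ) ). -/
open Matrix

open Polynomial in
lemma aux_det_one_add {n : Type*} [Fintype n] [DecidableEq n] (M : Matrix n n ℝ) :
    (1 + M).det = ∑ s : Finset n,
      (M.submatrix (Subtype.val : s → n) (Subtype.val : s → n)).det := by
  have h := (detRowAlternating : (n → ℝ) [⋀^n]→ₗ[ℝ] ℝ).map_add_univ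
    (M.row) ((1 : Matrix n n ℝ).row)
  have h2 : (1 + M).det = (detRowAlternating : (n → ℝ) [⋀^n]→ₗ[ℝ] ℝ)
      (M.row + (1 : Matrix n n ℝ).row) := by
    rw [add_comm]; rfl
  rw [h2, h]
  refine Finset.sum_congr rfl fun s _ => ?_
  rw [← det_piecewise_one_eq_submatrix_det M s]
  rfl

lemma aux_det_expand {p N : ℕ} (Z : Matrix (Fin p) (Fin N) ℝ) (σ : Fin N → Fin N)
    (w : Fin N → ℝ) :
    (1 + Z.submatrix id σ * diagonal w * Zᵀ).det = ∑ s : Finset (Fin N),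
      (∏ i ∈ s, w i) * (Matrix.of fun a b : s => (Zᵀ * Z) a (σ b)).det := by
  rw [det_one_add_mul_comm, aux_det_one_add]
  refine Finset.sum_congr rfl fun s _ => ?_
  have : (Zᵀ * (Z.submatrix id σ * diagonal w)).submatrix
      (Subtype.val : s → Fin N) (Subtype.val : s → Fin N)
      = (Matrix.of fun a b : s => (Zᵀ * Z) a (σ b)) * diagonal (fun i : s => w i) := by
    ext a b
    rw [← Matrix.mul_assoc]
    simp only [Matrix.submatrix_apply, Matrix.mul_diagonal, Matrix.of_apply]
    rfl
  rw [this, det_mul, det_diagonal, Finset.prod_coe_sort s w, mul_comm]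

lemma aux_detSq {p N : ℕ} (Z : Matrix (Fin p) (Fin N) ℝ) (s : Finset (Fin N))
    (h : s.card = p) :
    ((Zᵀ * Z).submatrix (Subtype.val : s → Fin N) (Subtype.val : s → Fin N)).det
      = detSq Z s := by
  rw [detSq, dif_pos h, ← det_submatrix_equiv_self (s.orderIsoOfFin h).toEquiv, sq]
  conv_rhs => rw [← det_transpose, det_transpose]
  nth_rewrite 1 [← det_transpose (Matrix.of _)]
  rw [← det_mul]
  congr 1

open Polynomial in
lemma aux_cauchy_binet {p N : ℕ} (Z : Matrix (Fin p) (Fin N) ℝ) (w : Fin N → ℝ) :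
    (Z * diagonal w * Zᵀ).det = ∑ s : Finset (Fin N), (∏ i ∈ s, w i) * detSq Z s := by
  have h1 := coeff_det_one_add_X_smul_eq_sum_minors (Z * diagonal w * Zᵀ) p
  have h2 := coeff_det_one_add_X_smul_eq_sum_minors (Zᵀ * (Z * diagonal w)) p
  have h3 : (1 + (X : ℝ[X]) • (Z * diagonal w * Zᵀ).map C).det
      = (1 + (X : ℝ[X]) • (Zᵀ * (Z * diagonal w)).map C).det := by
    rw [Matrix.map_mul (L := Z * diagonal w), ← Matrix.smul_mul, det_one_add_mul_comm,
      Matrix.mul_smul, ← Matrix.map_mul]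
  have h4 : (Finset.univ : Finset (Fin p)).powersetCard p = {Finset.univ} := by
    have := Finset.powersetCard_self (Finset.univ : Finset (Fin p))
    rwa [Finset.card_fin] at this
  rw [h3, h2, h4, Finset.sum_singleton] at h1
  have h5 : ((Z * diagonal w * Zᵀ).submatrix
      (Subtype.val : ((Finset.univ : Finset (Fin p)) : Type) → Fin p) Subtype.val).det
      = (Z * diagonal w * Zᵀ).det :=
    det_submatrix_equiv_self (Equiv.subtypeUnivEquiv (fun x => Finset.mem_univ x)) _
  rw [← h5, ← h1, Finset.powersetCard_eq_filter, Finset.powerset_univ, Finset.sum_filter]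
  refine Finset.sum_congr rfl fun s _ => ?_
  split_ifs with hs
  · have : (Zᵀ * (Z * diagonal w)).submatrix
      (Subtype.val : s → Fin N) (Subtype.val : s → Fin N)
      = ((Zᵀ * Z).submatrix (Subtype.val : s → Fin N) (Subtype.val : s → Fin N))
        * diagonal (fun i : s => w i) := by
      ext a b
      rw [← Matrix.mul_assoc]
      simp
    rw [this, det_mul, det_diagonal, Finset.prod_coe_sort s w, mul_comm, aux_detSq Z s hs]
  · simp [detSq, hs]

/-- Gram matrix of the complement of `J`. -/
noncomputable def auxG {p N : ℕ} (Z : Matrix (Fin p) (Fin N) ℝ) (J : Finset (Fin N)) :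
    Matrix (Fin p) (Fin p) ℝ :=
  1 - Z * diagonal (fun i => if i ∈ J then (1 : ℝ) else 0) * Zᵀ

lemma aux_prob {p N : ℕ} (Z : Matrix (Fin p) (Fin N) ℝ) (hZ : Z * Zᵀ = 1)
    (J : Finset (Fin N)) :
    prDP Z {S | Disjoint S J} = (auxG Z J).det := by
  have h : auxG Z J = Z * diagonal (fun i => if i ∈ J then (0 : ℝ) else 1) * Zᵀ := by
    rw [auxG, sub_eq_iff_eq_add, ← Matrix.add_mul, ← Matrix.mul_add, diagonal_add]
    have : (fun i => (if i ∈ J then (0 : ℝ) else 1) + (if i ∈ J then (1 : ℝ) else 0))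
        = fun _ => 1 := by
      ext i; split_ifs <;> simp
    rw [this, diagonal_one, Matrix.mul_one, hZ]
  rw [h, aux_cauchy_binet, prDP]
  refine Finset.sum_congr rfl fun s _ => ?_
  by_cases hs : Disjoint s J
  · rw [if_pos (by exact hs), Finset.prod_eq_one, one_mul]
    intro i hi
    rw [if_neg (Finset.disjoint_left.mp hs hi)]
  · rw [if_neg (by exact hs)]
    obtain ⟨i, hi, hj⟩ := Finset.not_disjoint_iff.mp hs
    rw [Finset.prod_eq_zero hi (by simp [hj]), zero_mul]

lemma aux_prob_mem {p N : ℕ} (Z : Matrix (Fin p) (Fin N) ℝ) 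
    (J : Finset (Fin N)) (u : Fin N) :
    prDP Z {S | u ∈ S ∧ Disjoint S J}
      = prDP Z {S | Disjoint S J} - prDP Z {S | Disjoint S (insert u J)} := by
  simp only [prDP]
  rw [← Finset.sum_sub_distrib]
  refine Finset.sum_congr rfl fun s _ => ?_
  simp only [Set.mem_ofPred_eq, Finset.disjoint_insert_right]
  by_cases h1 : u ∈ s <;> by_cases h2 : Disjoint s J <;> simp [h1, h2]

lemma aux_prDP_mono {p N : ℕ} (Z : Matrix (Fin p) (Fin N) ℝ) 
    {E F : Set (Finset (Fin N))} (h : E ⊆ F) : prDP Z E ≤ prDP Z F := by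
  simp only [prDP]
  refine Finset.sum_le_sum fun s _ => ?_
  have h0 : 0 ≤ detSq Z s := by
    unfold detSq; split_ifs <;> positivity
  by_cases h1 : s ∈ E
  · simp [h1, h h1]
  · rw [if_neg h1]; split_ifs <;> simp [h0]

lemma auxG_insert {p N : ℕ} (Z : Matrix (Fin p) (Fin N) ℝ) (A : Finset (Fin N))
    (v : Fin N) (hv : v ∉ A) (a b : Fin p) :
    auxG Z (insert v A) a b = auxG Z A a b - Z a v * Z b v := by
  have : (fun i => if i ∈ insert v A then (1 : ℝ) else 0)
     = fun i => (if i ∈ A then (1 : ℝ) else 0) + (if i = v then 1 else 0) := by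
    ext i
    by_cases h : i = v
    · subst h; simp [hv]
    · simp [h]
  rw [auxG, auxG, this, ← diagonal_add, Matrix.mul_add, Matrix.add_mul, sub_add_eq_sub_sub,
    Matrix.sub_apply]
  congr 1
  simp [Matrix.mul_apply, Matrix.diagonal_apply, mul_ite, ite_mul]

/-- The bilinear form of the inverse of `auxG`. -/
noncomputable def auxs {p N : ℕ} (Z : Matrix (Fin p) (Fin N) ℝ) (A : Finset (Fin N)) :
    Matrix (Fin N) (Fin N) ℝ := Zᵀ * (auxG Z A)⁻¹ * Z

lemma auxs_symm {p N : ℕ} (Z : Matrix (Fin p) (Fin N) ℝ) (A : Finset (Fin N)) (u v : Fin N) :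
    auxs Z A u v = auxs Z A v u := by
  have hG : (auxG Z A)ᵀ = auxG Z A := by
    simp [auxG, Matrix.transpose_mul, Matrix.mul_assoc]
  have : (auxs Z A)ᵀ = auxs Z A := by
    simp [auxs, Matrix.transpose_mul, Matrix.transpose_nonsing_inv, hG, Matrix.mul_assoc]
  exact congrFun (congrFun this v) u

lemma aux_rank {p N : ℕ} {m : Type*} [Fintype m] [DecidableEq m]
    (Z : Matrix (Fin p) (Fin N) ℝ) (A : Finset (Fin N))
    (hA : (auxG Z A).det ≠ 0) (c d : m → Fin N) (e : ℝ) :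
    (auxG Z A + e • (Z.submatrix id c * (Z.submatrix id d)ᵀ)).det
      = (auxG Z A).det * (1 + e • (auxs Z A).submatrix d c).det := by
  rw [← Matrix.smul_mul, det_add_mul _ _ (isUnit_iff_ne_zero.mpr hA), Matrix.mul_smul]
  rfl

lemma aux_one {p N : ℕ} (Z : Matrix (Fin p) (Fin N) ℝ) (A : Finset (Fin N))
    (hA : (auxG Z A).det ≠ 0) (v : Fin N) (hv : v ∉ A) :
    (auxG Z (insert v A)).det = (auxG Z A).det * (1 - auxs Z A v v) := by
  have h := aux_rank (m := Unit) Z A hA (fun _ => v) (fun _ => v) (-1)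
  have h2 : auxG Z A + (-1 : ℝ) • (Z.submatrix id (fun _ : Unit => v) *
      (Z.submatrix id (fun _ : Unit => v))ᵀ) = auxG Z (insert v A) := by
    ext a b
    rw [auxG_insert Z A v hv]
    simp [Matrix.mul_apply, sub_eq_add_neg]
  rw [← h2, h]
  simp [sub_eq_add_neg]

lemma aux_two {p N : ℕ} (Z : Matrix (Fin p) (Fin N) ℝ) (A : Finset (Fin N))
    (hA : (auxG Z A).det ≠ 0) (u v : Fin N) (hu : u ∉ A) (hv : v ∉ A) (huv : u ≠ v) :
    (auxG Z (insert u (insert v A))).det = (auxG Z A).det *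
      ((1 - auxs Z A u u) * (1 - auxs Z A v v) - auxs Z A u v ^ 2) := by
  have h := aux_rank (m := Fin 2) Z A hA ![u, v] ![u, v] (-1)
  have h2 : auxG Z A + (-1 : ℝ) • (Z.submatrix id ![u, v] *
      (Z.submatrix id ![u, v])ᵀ) = auxG Z (insert u (insert v A)) := by
    ext a b
    rw [auxG_insert Z _ u (by simp [huv, hu]), auxG_insert Z A v hv]
    simp only [Matrix.add_apply, Matrix.smul_apply, Matrix.mul_apply, Matrix.submatrix_apply,
      Matrix.transpose_apply, Fin.sum_univ_two, Matrix.cons_val_zero, Matrix.cons_val_one, id,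
      smul_eq_mul]
    ring
  rw [← h2, h, det_fin_two]
  simp only [Matrix.add_apply, Matrix.smul_apply, Matrix.submatrix_apply, Matrix.cons_val_zero,
    Matrix.cons_val_one, smul_eq_mul, Matrix.one_apply_eq,
    Matrix.one_apply_ne (zero_ne_one : (0 : Fin 2) ≠ 1),
    Matrix.one_apply_ne (one_ne_zero : (1 : Fin 2) ≠ 0)]
  rw [auxs_symm Z A v u]
  ring

lemma aux_entry {p N : ℕ} (B Z : Matrix (Fin p) (Fin N) ℝ) (w : Fin N → ℝ) (a b : Fin p) :
    (B * diagonal w * Zᵀ) a b = ∑ j, B a j * w j * Z b j := by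
  rw [Matrix.mul_apply]
  refine Finset.sum_congr rfl fun j _ => ?_
  rw [Matrix.mul_diagonal, Matrix.transpose_apply]

lemma aux_lhs {p N : ℕ} (Z : Matrix (Fin p) (Fin N) ℝ) (A : Finset (Fin N))
    (hA : (auxG Z A).det ≠ 0) (u v : Fin N) (hu : u ∉ A) :
    (∑ T ∈ A.powerset, (-1 : ℝ) ^ T.card *
      (Matrix.of fun a b : Option T =>
            (Zᵀ * Z) (a.elim u (fun t => (t : Fin N)))
                     (b.elim v (fun t => (t : Fin N)))).det)
      = (auxG Z A).det * auxs Z A u v := by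
  have h := aux_rank (m := Unit) Z A hA (fun _ => v) (fun _ => u) 1
  have hr : (1 + (1 : ℝ) • (auxs Z A).submatrix (fun _ : Unit => u) (fun _ : Unit => v)).det
    = 1 + auxs Z A u v := by simp
  rw [hr] at h
  have e1 := aux_det_expand Z id (fun i => if i ∈ A then (-1 : ℝ) else 0)
  have e2 := aux_det_expand Z (fun i => if i = u then v else i)
    (fun i => if i = u then 1 else if i ∈ A then (-1 : ℝ) else 0)
  have g1 : 1 + Z.submatrix id id * diagonal (fun i => if i ∈ A then (-1 : ℝ) else 0) * Zᵀ
      = auxG Z A := by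
    have : (fun i => if i ∈ A then (-1 : ℝ) else 0)
        = fun i => -(if i ∈ A then (1 : ℝ) else 0) := by
      ext i; split_ifs <;> simp
    have h3 : diagonal (fun i => -(if i ∈ A then (1 : ℝ) else 0))
        = -diagonal (fun i => (if i ∈ A then (1 : ℝ) else 0)) := (diagonal_neg _).symm
    rw [this, auxG, h3, Matrix.mul_neg, Matrix.neg_mul, ← sub_eq_add_neg, Matrix.submatrix_id_id]
  have g2 : 1 + Z.submatrix id (fun i => if i = u then v else i) *
      diagonal (fun i => if i = u then 1 else if i ∈ A then (-1 : ℝ) else 0) * Zᵀ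
      = auxG Z A + (1 : ℝ) • (Z.submatrix id (fun _ : Unit => v) *
        (Z.submatrix id (fun _ : Unit => u))ᵀ) := by
    rw [← g1, add_assoc]
    congr 1
    ext a b
    simp only [Matrix.add_apply, aux_entry, Matrix.mul_apply (M := Z.submatrix id (fun _ : Unit => v)),
      Matrix.submatrix_apply, Matrix.transpose_apply, id, one_smul, Finset.univ_unique, Finset.sum_singleton]
    rw [← Finset.sum_erase_add _ _ (Finset.mem_univ u),
      ← Finset.sum_erase_add (f := fun x => Z a x * (if x ∈ A then (-1 : ℝ) else 0) * Z b x)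
        _ (Finset.mem_univ u)]
    simp only [if_true, hu, if_false, mul_one, mul_zero, zero_mul, add_zero]
    congr 1
    refine Finset.sum_congr rfl fun i hi => ?_
    have : i ≠ u := Finset.ne_of_mem_erase hi
    simp [this]
  rw [g1] at e1
  rw [g2, h] at e2
  have f1 : (auxG Z A).det = ∑ T ∈ A.powerset, (-1 : ℝ) ^ T.card *
      (Matrix.of fun a b : T => (Zᵀ * Z) a b).det := by
    rw [e1, ← Finset.sum_subset (Finset.subset_univ A.powerset)]
    · refine Finset.sum_congr rfl fun T hT => ?_
      rw [Finset.mem_powerset] at hT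
      rw [Finset.prod_congr rfl (g := fun _ => (-1 : ℝ)) (fun i hi => by simp [hT hi])]
      simp
    · intro T _ hT
      rw [Finset.mem_powerset, Finset.not_subset] at hT
      obtain ⟨i, hi, hi'⟩ := hT
      rw [Finset.prod_eq_zero hi (by simp [hi']), zero_mul]
  rw [← Finset.sum_subset (Finset.subset_univ (insert u A).powerset) (by
      intro T _ hT
      rw [Finset.mem_powerset, Finset.not_subset] at hT
      obtain ⟨i, hi, hi'⟩ := hT
      rw [Finset.mem_insert, not_or] at hi'
      rw [Finset.prod_eq_zero hi (by simp [hi'.1, hi'.2]), zero_mul]),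
    Finset.sum_powerset_insert hu] at e2
  have f2 : ∑ T ∈ A.powerset, (∏ i ∈ T, if i = u then 1 else if i ∈ A then (-1 : ℝ) else 0) *
      (Matrix.of fun a b : T => (Zᵀ * Z) a (if (b : Fin N) = u then v else b)).det
      = (auxG Z A).det := by
    rw [f1]
    refine Finset.sum_congr rfl fun T hT => ?_
    rw [Finset.mem_powerset] at hT
    have hTu : ∀ i ∈ T, i ≠ u := fun i hi h => hu (h ▸ hT hi)
    rw [Finset.prod_congr rfl (g := fun _ => (-1 : ℝ)) (fun i hi => by simp [hT hi, hTu i hi])]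
    rw [Finset.prod_const]
    congr 3
    ext a b
    rw [if_neg (hTu b b.2)]
  have f3 : ∑ T ∈ A.powerset, (∏ i ∈ insert u T,
        if i = u then 1 else if i ∈ A then (-1 : ℝ) else 0) *
      (Matrix.of fun a b : (insert u T : Finset (Fin N)) =>
        (Zᵀ * Z) a (if (b : Fin N) = u then v else b)).det
      = ∑ T ∈ A.powerset, (-1 : ℝ) ^ T.card *
      (Matrix.of fun a b : Option T =>
            (Zᵀ * Z) (a.elim u (fun t => (t : Fin N)))
                     (b.elim v (fun t => (t : Fin N)))).det := by
    refine Finset.sum_congr rfl fun T hT => ?_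
    rw [Finset.mem_powerset] at hT
    have hTu : ∀ i ∈ T, i ≠ u := fun i hi h => hu (h ▸ hT hi)
    have huT : u ∉ T := fun h => hTu u h rfl
    rw [Finset.prod_insert huT, if_pos rfl, one_mul,
      Finset.prod_congr rfl (g := fun _ => (-1 : ℝ)) (fun i hi => by simp [hT hi, hTu i hi]),
      Finset.prod_const]
    congr 1
    rw [← det_submatrix_equiv_self (Finset.subtypeInsertEquivOption huT).symm]
    congr 1
    ext a b
    rcases a with _ | a <;> rcases b with _ | b <;>
      simp [Finset.subtypeInsertEquivOption, hTu]
    all_goals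
      intro hh
      exact absurd hh (hTu _ b.2)
  rw [f2, f3] at e2
  linarith

/-- Proposition 2: with K = Zᵀ Z the kernel, x₁,…,xₙ distinct (2 ≤ n ≤ p),
index 0 playing the role of subscript 1 and index n−1 that of subscript n, and
D(T) = ⟨z_{x₁} ∧ ⋀_{t ∈ T} z_t, z_{xₙ} ∧ ⋀_{t ∈ T} z_t⟩ for T ⊆ {x₂,…,x_{n−1}},
(Σ_{T ⊆ {x₂,…,x_{n−1}}} (−1)^{|T|} D(T))²
  = P({x₂,…,xₙ} ⊆ φᶜ) · P({x₂,…,x_{n−1}} ⊆ φᶜ)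
    · ( P(x₁ ∈ φ | {x₂,…,xₙ} ⊆ φᶜ) − P(x₁ ∈ φ | {x₂,…,x_{n−1}} ⊆ φᶜ) ). -/
theorem proposition_two {N p n : ℕ} (hp : 1 < p) (hpN : p < N)
    (Z : Matrix (Fin p) (Fin N) ℝ) (hZ : Z * Zᵀ = 1)
    (hn : 2 ≤ n) (hnp : n ≤ p)
    (x : Fin n → Fin N) (hx : Function.Injective x)
    (i0 ilast : Fin n) (hi0 : (i0 : ℕ) = 0) (hilast : (ilast : ℕ) = n - 1)
    (hpos : 0 < prDP Z {S | ∀ i : Fin n, i ≠ i0 → x i ∉ S}) :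
    (∑ T ∈ (Finset.image x
          (Finset.univ.filter fun i : Fin n => i ≠ i0 ∧ i ≠ ilast)).powerset,
        (-1 : ℝ) ^ T.card *
          (Matrix.of fun a b : Option T =>
            (Zᵀ * Z) (a.elim (x i0) (fun t => (t : Fin N)))
                     (b.elim (x ilast) (fun t => (t : Fin N)))).det) ^ 2
      = prDP Z {S | ∀ i : Fin n, i ≠ i0 → x i ∉ S}
          * prDP Z {S | ∀ i : Fin n, i ≠ i0 → i ≠ ilast → x i ∉ S}
          * (prDP Z {S | x i0 ∈ S ∧ ∀ i : Fin n, i ≠ i0 → x i ∉ S}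
                / prDP Z {S | ∀ i : Fin n, i ≠ i0 → x i ∉ S}
              - prDP Z {S | x i0 ∈ S ∧ ∀ i : Fin n, i ≠ i0 → i ≠ ilast → x i ∉ S}
                / prDP Z {S | ∀ i : Fin n, i ≠ i0 → i ≠ ilast → x i ∉ S}) := by
  have hne : i0 ≠ ilast := by
    intro h
    have := congrArg Fin.val h
    omega
  set A : Finset (Fin N) := Finset.image x
    (Finset.univ.filter fun i : Fin n => i ≠ i0 ∧ i ≠ ilast) with hAdef
  have hmem : ∀ i, x i ∈ A ↔ i ≠ i0 ∧ i ≠ ilast := by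
    intro i
    simp [hAdef, hx.eq_iff]
  have hu : x i0 ∉ A := by simp [hmem]
  have hv : x ilast ∉ A := by simp [hmem]
  have huv : x i0 ≠ x ilast := fun h => hne (hx h)
  have dA : ∀ S : Finset (Fin N),
      (∀ i : Fin n, i ≠ i0 → i ≠ ilast → x i ∉ S) ↔ Disjoint S A := by
    intro S
    rw [Finset.disjoint_right]
    constructor
    · intro h a ha
      obtain ⟨i, hi, rfl⟩ := Finset.mem_image.mp ha
      have := (hmem i).mp ha
      exact h i this.1 this.2
    · intro h i h1 h2
      exact h ((hmem i).mpr ⟨h1, h2⟩)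
  have dB : ∀ S : Finset (Fin N),
      (∀ i : Fin n, i ≠ i0 → x i ∉ S) ↔ Disjoint S (insert (x ilast) A) := by
    intro S
    rw [Finset.disjoint_insert_right, ← dA]
    constructor
    · intro h
      exact ⟨h _ hne.symm, fun i h1 _ => h i h1⟩
    · rintro ⟨h1, h2⟩ i hi
      by_cases h : i = ilast
      · rw [h]; exact h1
      · exact h2 i hi h
  simp only [dA, dB] at hpos ⊢
  have hposA : 0 < prDP Z {S | Disjoint S A} := lt_of_lt_of_le hpos
    (aux_prDP_mono Z fun S hS => (Finset.disjoint_insert_right.mp hS).2)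
  rw [aux_prob_mem, aux_prob_mem]
  simp only [aux_prob Z hZ] at hpos hposA ⊢
  have hA := hposA.ne'
  have hB := hpos.ne'
  rw [aux_lhs Z A hA _ _ hu]
  have key : (auxG Z (insert (x ilast) A)).det * (auxG Z A).det *
      (((auxG Z (insert (x ilast) A)).det -
        (auxG Z (insert (x i0) (insert (x ilast) A))).det) / (auxG Z (insert (x ilast) A)).det
      - ((auxG Z A).det - (auxG Z (insert (x i0) A)).det) / (auxG Z A).det)
      = (auxG Z (insert (x ilast) A)).det * (auxG Z (insert (x i0) A)).det
        - (auxG Z A).det * (auxG Z (insert (x i0) (insert (x ilast) A))).det := by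
    field_simp
    ring
  rw [key, aux_two Z A hA _ _ hu hv huv, aux_one Z A hA _ hu, aux_one Z A hA _ hv]
  ring
end
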